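/- arXiv:1309.1771 — 2 statements merged into one kernel-verified Lean document; each statement's English description precedes it below -/
import Mathlib

section
/- Let C_{α,β} be a connected 1-dimensional simplicial even walk and let G be the simple graph whose edges are the facets occurring in C_{α,β}. Then either G is a cycle of even length, or G contains at least two distinct cycles. -/
open Finset

/-- Successor modulo `m` on `Fin m`. -/
def cyclicNext {m : ℕ} (i : Fin m) : Fin m := ⟨(i.val + 1) % m, Nat.mod_lt _ i.pos⟩

/-- The `α`-degree of a vertex `x`. -/
def walkDeg {V : Type*} [DecidableEq V] {q s : ℕ} (F : Fin q → Finset V)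
    (α : Fin s → Fin q) (x : V) : ℕ :=
  (Finset.univ.filter fun t : Fin s => x ∈ F (α t)).card

/-- Simplicial even walk `C_{α,β}`. -/
def IsEvenWalk {V : Type*} [DecidableEq V] {q s : ℕ} (F : Fin q → Finset V)
    (α β : Fin s → Fin q) : Prop :=
  2 ≤ s ∧ Disjoint (Set.range α) (Set.range β) ∧
    ∀ i ∈ Set.range α, ∀ j ∈ Set.range β,
      ¬ (↑(F i \ F j) ⊆ {x : V | walkDeg F β x < walkDeg F α x}) ∧
      ¬ (↑(F j \ F i) ⊆ {x : V | walkDeg F α x < walkDeg F β x})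

/-- The vertex set of the even walk `C_{α,β}`. -/
def walkVerts {V : Type*} [DecidableEq V] {q s : ℕ} (F : Fin q → Finset V)
    (α β : Fin s → Fin q) : Finset V :=
  Finset.univ.biUnion fun t : Fin s => F (α t) ∪ F (β t)

/-- Two vertices are adjacent in (the graph formed by the facets of) `C_{α,β}`. -/
def walkAdj {V : Type*} [DecidableEq V] {q s : ℕ} (F : Fin q → Finset V)
    (α β : Fin s → Fin q) (u v : V) : Prop :=
  u ≠ v ∧ ∃ t : Fin s,
    (u ∈ F (α t) ∧ v ∈ F (α t)) ∨ (u ∈ F (β t) ∧ v ∈ F (β t))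

/-- The set of (distinct) facets occurring in `C_{α,β}`: the edge set of the
graph `G` formed by the walk. -/
def walkEdges {V : Type*} [DecidableEq V] {q s : ℕ} (F : Fin q → Finset V)
    (α β : Fin s → Fin q) : Finset (Finset V) :=
  (Finset.univ.image fun t : Fin s => F (α t)) ∪
    (Finset.univ.image fun t : Fin s => F (β t))

/-!
The condition on an even walk forces every vertex of an `α`-edge to lie on a `β`-edge and vice
versa, and no `α`-edge is a `β`-edge, so every vertex of `G` has degree at least two and `G`
contains a cycle. If that cycle `C` is the only one, deleting one of its edges leaves a forest, so
`G` has at most as many edges as vertices; hence all degrees are two and every edge lies on a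
cycle, that is, on `C`. Each vertex then has exactly one `α`-edge, so the `α`-edges form a perfect
matching, and `C` has as many edges as `G` has vertices, an even number.
-/

section Cycles

open SimpleGraph

variable {V W : Type*}

/-- `G` is, up to isolated vertices, a cycle of even length. -/
def IsEvenCycle (G : SimpleGraph V) : Prop :=
  ∃ (v : V) (c : G.Walk v v), c.IsCycle ∧ Even c.length ∧ c.edgeSet = G.edgeSet

/-- `G` contains two distinct cycles. Cycles are compared through their edge sets, so that
rotating or reversing a closed walk does not produce a new cycle. -/
def HasTwoCycles (G : SimpleGraph V) : Prop :=
  ∃ (v w : V) (c : G.Walk v v) (d : G.Walk w w),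
    c.IsCycle ∧ d.IsCycle ∧ c.edgeSet ≠ d.edgeSet

theorem IsEvenCycle.map {G : SimpleGraph V} (h : IsEvenCycle G) (f : V ↪ W) :
    IsEvenCycle (G.map f) := by
  obtain ⟨v, c, hc, heven, hall⟩ := h
  refine ⟨_, c.map (Embedding.map f G).toHom, hc.map f.injective,
    by rwa [Walk.length_map], ?_⟩
  rw [Walk.edgeSet_map, hall, SimpleGraph.edgeSet_map]
  rfl

theorem HasTwoCycles.map {G : SimpleGraph V} (h : HasTwoCycles G) (f : V ↪ W) :
    HasTwoCycles (G.map f) := by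
  obtain ⟨v, w, c, d, hc, hd, hne⟩ := h
  refine ⟨_, _, c.map (Embedding.map f G).toHom, d.map (Embedding.map f G).toHom,
    hc.map f.injective, hd.map f.injective, ?_⟩
  rw [Walk.edgeSet_map, Walk.edgeSet_map]
  exact (Sym2.map.injective f.injective).image_injective.ne hne

theorem degree_sup_of_disjoint {A B : SimpleGraph V} (h : Disjoint A B) (v : V)
    [Fintype (A.neighborSet v)] [Fintype (B.neighborSet v)] [Fintype ((A ⊔ B).neighborSet v)] :
    (A ⊔ B).degree v = A.degree v + B.degree v := by
  rw [← card_neighborFinset_eq_degree, neighborFinset_sup_of_disjoint v h, card_disjUnion,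
    card_neighborFinset_eq_degree, card_neighborFinset_eq_degree]

theorem two_le_degree_sup_of_disjoint {A B : SimpleGraph V} (h : Disjoint A B) {v : V}
    [Fintype ((A ⊔ B).neighborSet v)] (hA : v ∈ A.support) (hB : v ∈ B.support) :
    2 ≤ (A ⊔ B).degree v := by
  obtain ⟨a, ha⟩ := hA
  obtain ⟨b, hb⟩ := hB
  have hab : a ≠ b := by
    rintro rfl
    exact disjoint_left.1 h v a ha hb
  rw [← card_neighborFinset_eq_degree, Nat.succ_le_iff]
  exact one_lt_card.2 ⟨a, (mem_neighborFinset ..).2 (.inl ha), b,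
    (mem_neighborFinset ..).2 (.inr hb), hab⟩

theorem exists_isCycle_of_mem_edgeSet_of_isCycles [Finite V] {G : SimpleGraph V} (hG : G.IsCycles)
    {f : Sym2 V} (hf : f ∈ G.edgeSet) :
    ∃ (v : V) (c : G.Walk v v), c.IsCycle ∧ f ∈ c.edgeSet := by
  induction f with
  | h x y =>
    exact adj_and_reachable_delete_edges_iff_exists_cycle.1 ⟨hf, hG.reachable_deleteEdges hf⟩

section FiniteGraph

variable [Fintype V] {G : SimpleGraph V} [DecidableRel G.Adj]

theorem isCycles_of_isRegularOfDegree_two (hG : G.IsRegularOfDegree 2) : G.IsCycles := by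
  intro v _
  rw [Set.ncard_eq_toFinset_card', Set.toFinset_card, card_neighborSet_eq_degree, hG]

theorem card_edgeFinset_lt_card_of_isAcyclic [Nonempty V] (hG : G.IsAcyclic) :
    #G.edgeFinset < Fintype.card V := by
  classical
  obtain ⟨T, hGT, -, hT⟩ := connected_top.exists_isTree_le_of_le_of_isAcyclic le_top hG
  rw [← hT.card_edgeFinset, Nat.lt_succ_iff]
  exact card_le_card (edgeFinset_mono hGT)

theorem exists_isCycle_of_two_le_degree [Nonempty V] (hdeg : ∀ v, 2 ≤ G.degree v) :
    ∃ (v : V) (c : G.Walk v v), c.IsCycle := by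
  by_contra! hacyc
  have hlt := card_edgeFinset_lt_card_of_isAcyclic (G := G) fun v c => hacyc v c
  have hsum : ∑ _v : V, 2 ≤ 2 * #G.edgeFinset :=
    G.sum_degrees_eq_twice_card_edges ▸ sum_le_sum fun v _ => hdeg v
  simp only [sum_const, card_univ, smul_eq_mul] at hsum
  omega

theorem card_edgeFinset_le_card_of_unique_cycle {v : V} {c : G.Walk v v} (hc : c.IsCycle)
    (huniq : ∀ (w : V) (d : G.Walk w w), d.IsCycle → d.edgeSet = c.edgeSet) :
    #G.edgeFinset ≤ Fintype.card V := by
  classical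
  have : Nonempty V := ⟨v⟩
  obtain ⟨f, hf⟩ := c.edges.exists_mem_of_ne_nil (by simp [hc.not_nil])
  have hacyc : (G.deleteEdges {f}).IsAcyclic := by
    intro w d hd
    have hfd : f ∈ (d.mapLe (G.deleteEdges_le {f})).edgeSet := by rwa [huniq w _ (hd.mapLe _)]
    rw [Walk.edgeSet_mapLe_eq_edgeSet] at hfd
    simpa using d.edges_subset_edgeSet hfd
  have hforest := card_edgeFinset_lt_card_of_isAcyclic hacyc
  have herase : (G.deleteEdges {f}).edgeFinset = G.edgeFinset.erase f := by
    ext g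
    simp [and_comm]
  rw [herase, card_erase_of_mem (mem_edgeFinset.2 (c.edges_subset_edgeSet hf))] at hforest
  omega

theorem isRegularOfDegree_two_of_card_edgeFinset_le (hdeg : ∀ v, 2 ≤ G.degree v)
    (hcard : #G.edgeFinset ≤ Fintype.card V) : G.IsRegularOfDegree 2 := by
  have hsum : ∑ v, G.degree v ≤ ∑ _v : V, 2 := by
    rw [G.sum_degrees_eq_twice_card_edges, sum_const, card_univ, smul_eq_mul, mul_comm]
    exact Nat.mul_le_mul_right 2 hcard
  have heq := (sum_eq_sum_iff_of_le fun v _ => hdeg v).1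
    (le_antisymm (sum_le_sum fun v _ => hdeg v) hsum)
  exact fun v => (heq v (mem_univ v)).symm

theorem card_edgeFinset_of_isRegularOfDegree_two (hG : G.IsRegularOfDegree 2) :
    #G.edgeFinset = Fintype.card V := by
  have hsum := G.sum_degrees_eq_twice_card_edges
  simp only [hG.degree_eq, sum_const, card_univ, smul_eq_mul] at hsum
  omega

theorem even_card_of_isRegularOfDegree_one (hG : G.IsRegularOfDegree 1) :
    Even (Fintype.card V) := by
  have hsum := G.sum_degrees_eq_twice_card_edges
  simp only [hG.degree_eq, sum_const, card_univ, smul_eq_mul, mul_one] at hsum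
  exact hsum ▸ even_two_mul _

theorem length_eq_card_edgeFinset_of_isTrail {v w : V} {p : G.Walk v w} (hp : p.IsTrail)
    (hall : p.edgeSet = G.edgeSet) : p.length = #G.edgeFinset := by
  classical
  rw [← p.length_edges, ← List.toFinset_card_of_nodup hp.edges_nodup]
  congr 1
  rw [← coe_inj, p.coe_edges_toFinset, hall, coe_edgeFinset]

end FiniteGraph

theorem isEvenCycle_sup_of_unique_cycle [Finite V] {A B : SimpleGraph V} (hdisj : Disjoint A B)
    (hA : ∀ v, v ∈ A.support) (hB : ∀ v, v ∈ B.support) {v : V} {c : (A ⊔ B).Walk v v}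
    (hc : c.IsCycle)
    (huniq : ∀ (w : V) (d : (A ⊔ B).Walk w w), d.IsCycle → d.edgeSet = c.edgeSet) :
    IsEvenCycle (A ⊔ B) := by
  classical
  have := Fintype.ofFinite V
  have htwo : (A ⊔ B).IsRegularOfDegree 2 :=
    isRegularOfDegree_two_of_card_edgeFinset_le
      (fun v => two_le_degree_sup_of_disjoint hdisj (hA v) (hB v))
      (card_edgeFinset_le_card_of_unique_cycle hc huniq)
  have hone : A.IsRegularOfDegree 1 := fun v => by
    have hsum := (degree_sup_of_disjoint hdisj v).symm.trans (htwo.degree_eq v)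
    have hApos := (A.degree_pos_iff_mem_support v).2 (hA v)
    have hBpos := (B.degree_pos_iff_mem_support v).2 (hB v)
    omega
  have hall : c.edgeSet = (A ⊔ B).edgeSet := by
    refine Set.Subset.antisymm c.edges_subset_edgeSet fun f hf => ?_
    obtain ⟨w, d, hd, hfd⟩ :=
      exists_isCycle_of_mem_edgeSet_of_isCycles (isCycles_of_isRegularOfDegree_two htwo) hf
    exact huniq w d hd ▸ hfd
  refine ⟨v, c, hc, ?_, hall⟩
  rw [length_eq_card_edgeFinset_of_isTrail hc.isTrail hall,
    card_edgeFinset_of_isRegularOfDegree_two htwo]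
  exact even_card_of_isRegularOfDegree_one hone

theorem isEvenCycle_or_hasTwoCycles_of_finite [Finite V] [Nonempty V] {A B : SimpleGraph V}
    (hdisj : Disjoint A B) (hA : ∀ v, v ∈ A.support) (hB : ∀ v, v ∈ B.support) :
    IsEvenCycle (A ⊔ B) ∨ HasTwoCycles (A ⊔ B) := by
  classical
  have := Fintype.ofFinite V
  obtain ⟨v, c, hc⟩ := exists_isCycle_of_two_le_degree fun v =>
    two_le_degree_sup_of_disjoint hdisj (hA v) (hB v)
  by_cases huniq : ∀ (w : V) (d : (A ⊔ B).Walk w w), d.IsCycle → d.edgeSet = c.edgeSet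
  · exact .inl (isEvenCycle_sup_of_unique_cycle hdisj hA hB hc huniq)
  · push Not at huniq
    obtain ⟨w, d, hd, hne⟩ := huniq
    exact .inr ⟨w, v, d, c, hd, hc, hne⟩

theorem mem_support_induce_support {A : SimpleGraph V} (v : A.support) :
    v ∈ (A.induce A.support).support := by
  obtain ⟨w, hvw⟩ := v.2
  exact ⟨⟨w, hvw.right_mem_support⟩, hvw⟩

theorem isEvenCycle_or_hasTwoCycles {A B : SimpleGraph V} (hdisj : Disjoint A B)
    (hsupp : A.support = B.support) (hfin : A.support.Finite) (hne : A.support.Nonempty) :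
    IsEvenCycle (A ⊔ B) ∨ HasTwoCycles (A ⊔ B) := by
  have := hfin.to_subtype
  have := hne.to_subtype
  have hle : (A ⊔ B).support ⊆ A.support := by
    rintro v ⟨w, hvw | hvw⟩
    · exact hvw.left_mem_support
    · exact hsupp ▸ hvw.left_mem_support
  have hdisj' : Disjoint (A.induce A.support) (B.induce A.support) :=
    disjoint_left.2 fun v w => disjoint_left.1 hdisj v w
  have hB : ∀ v, v ∈ (B.induce A.support).support := hsupp ▸ mem_support_induce_support
  rw [← ((A ⊔ B).spanningCoe_induce_eq_self A.support).2 hle]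
  exact (isEvenCycle_or_hasTwoCycles_of_finite hdisj' mem_support_induce_support hB).imp
    (·.map _) (·.map _)

theorem getVert_cyclicNext {G : SimpleGraph V} {v : V} (c : G.Walk v v) (t : Fin c.length) :
    c.getVert (cyclicNext t) = c.getVert (t + 1) := by
  rcases Nat.lt_or_ge (t + 1) c.length with hlt | hge
  · simp [cyclicNext, Nat.mod_eq_of_lt hlt]
  · have heq : (t : ℕ) + 1 = c.length := le_antisymm t.isLt hge
    simp [cyclicNext, heq]

theorem getVert_fin_injective_of_isCycle {G : SimpleGraph V} {v : V} {c : G.Walk v v}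
    (hc : c.IsCycle) : Function.Injective fun t : Fin c.length => c.getVert t := fun i j hij =>
  Fin.ext (hc.getVert_injOn' (Nat.le_sub_one_of_lt i.isLt) (Nat.le_sub_one_of_lt j.isLt) hij)

end Cycles

section PairGraph

open SimpleGraph

variable {V : Type*} [DecidableEq V]

/-- The graph whose edges are the two-element members of a family `E` of finite sets. -/
def pairGraph (E : Set (Finset V)) : SimpleGraph V :=
  fromEdgeSet (Sym2.toFinset ⁻¹' E)

/-- The edge set `{x₀, x₁}, …, {xₘ₋₁, x₀}` of the closed walk through the vertices `x`. -/
def cyclicPairs {m : ℕ} (x : Fin m → V) : Finset (Finset V) :=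
  univ.image fun t => {x t, x (cyclicNext t)}

theorem toFinset_sym2_injective : Function.Injective (Sym2.toFinset : Sym2 V → Finset V) :=
  fun a b hab => Sym2.ext fun x => by rw [← Sym2.mem_toFinset, hab, Sym2.mem_toFinset]

theorem pairGraph_union (E F : Set (Finset V)) :
    pairGraph (E ∪ F) = pairGraph E ⊔ pairGraph F := by
  simp only [pairGraph, Set.preimage_union, fromEdgeSet_union]

theorem disjoint_pairGraph {E F : Set (Finset V)} (h : Disjoint E F) :
    Disjoint (pairGraph E) (pairGraph F) := by
  rw [pairGraph, fromEdgeSet_disjoint, pairGraph, edgeSet_fromEdgeSet]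
  exact (h.preimage _).mono_right Set.sdiff_subset

theorem image_toFinset_edgeSet_pairGraph {E : Set (Finset V)} (hE : ∀ p ∈ E, #p = 2) :
    Sym2.toFinset '' (pairGraph E).edgeSet = E := by
  rw [pairGraph, edgeSet_fromEdgeSet]
  refine Set.Subset.antisymm (Set.image_subset_iff.2 fun z hz => hz.1) fun p hp => ?_
  obtain ⟨x, y, hxy, rfl⟩ := card_eq_two.1 (hE p hp)
  exact ⟨s(x, y), ⟨by rwa [Set.mem_preimage, Sym2.toFinset_mk_eq], by simpa using hxy⟩,
    Sym2.toFinset_mk_eq⟩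

theorem exists_eq_pair_of_mem_of_card_eq_two {p : Finset V} {x : V} (hx : x ∈ p) (hp : #p = 2) :
    ∃ y, x ≠ y ∧ p = {x, y} := by
  obtain ⟨y, hy⟩ := card_eq_one.1 (by rw [card_erase_of_mem hx, hp] : #(p.erase x) = 1)
  have hyp : y ∈ p.erase x := by rw [hy, mem_singleton]
  exact ⟨y, (ne_of_mem_erase hyp).symm, by rw [← insert_erase hx, hy]⟩

theorem mem_support_pairGraph {E : Set (Finset V)} (hE : ∀ p ∈ E, #p = 2) {x : V} :
    x ∈ (pairGraph E).support ↔ ∃ p ∈ E, x ∈ p := by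
  simp only [mem_support, pairGraph, fromEdgeSet_adj, Set.mem_preimage, Sym2.toFinset_mk_eq]
  constructor
  · rintro ⟨y, hxy, -⟩
    exact ⟨_, hxy, mem_insert_self x {y}⟩
  · rintro ⟨p, hp, hx⟩
    obtain ⟨y, hxy, rfl⟩ := exists_eq_pair_of_mem_of_card_eq_two hx (hE p hp)
    exact ⟨y, hp, hxy⟩

theorem finite_support_pairGraph {E : Set (Finset V)} (hE : E.Finite) :
    (pairGraph E).support.Finite := by
  refine (hE.biUnion fun p _ => p.finite_toSet).subset ?_
  rintro x ⟨y, hxy, -⟩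
  have hmem : s(x, y).toFinset ∈ E := hxy
  rw [Sym2.toFinset_mk_eq] at hmem
  exact Set.mem_biUnion hmem (mem_insert_self x {y})

theorem coe_cyclicPairs_getVert {G : SimpleGraph V} {v : V} (c : G.Walk v v) :
    (cyclicPairs fun t : Fin c.length => c.getVert t : Set (Finset V)) =
      Sym2.toFinset '' c.edgeSet := by
  have hedges : c.edgeSet =
      Set.range fun t : Fin c.length => s(c.getVert t, c.getVert (t + 1)) := by
    ext f
    induction f with
    | h x y => simp [Walk.mk_mem_edges_iff_exists, Fin.exists_iff]
  rw [hedges, ← Set.range_comp]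
  simp [cyclicPairs, getVert_cyclicNext, Function.comp_def, Sym2.toFinset_mk_eq]

theorem IsEvenCycle.exists_cyclicPairs {E : Finset (Finset V)} (hE : ∀ p ∈ E, #p = 2)
    (h : IsEvenCycle (pairGraph (E : Set (Finset V)))) :
    ∃ (m : ℕ) (x : Fin m → V), 3 ≤ m ∧ Even m ∧ Function.Injective x ∧ E = cyclicPairs x := by
  obtain ⟨v, c, hc, heven, hall⟩ := h
  refine ⟨c.length, _, hc.three_le_length, heven, getVert_fin_injective_of_isCycle hc, ?_⟩
  rw [← coe_inj, coe_cyclicPairs_getVert, hall, image_toFinset_edgeSet_pairGraph hE]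

theorem cyclicPairs_getVert_subset {E : Finset (Finset V)} {v : V}
    (c : (pairGraph (E : Set (Finset V))).Walk v v) :
    (cyclicPairs fun t : Fin c.length => c.getVert t) ⊆ E := by
  rw [← coe_subset, coe_cyclicPairs_getVert, Set.image_subset_iff]
  intro f hf
  exact (edgeSet_fromEdgeSet _ ▸ c.edges_subset_edgeSet hf :).1

theorem HasTwoCycles.exists_cyclicPairs {E : Finset (Finset V)}
    (h : HasTwoCycles (pairGraph (E : Set (Finset V)))) :
    ∃ (m₁ : ℕ) (x₁ : Fin m₁ → V) (m₂ : ℕ) (x₂ : Fin m₂ → V),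
      (3 ≤ m₁ ∧ Function.Injective x₁ ∧ cyclicPairs x₁ ⊆ E) ∧
      (3 ≤ m₂ ∧ Function.Injective x₂ ∧ cyclicPairs x₂ ⊆ E) ∧ cyclicPairs x₁ ≠ cyclicPairs x₂ := by
  obtain ⟨v, w, c, d, hc, hd, hne⟩ := h
  refine ⟨c.length, _, d.length, _,
    ⟨hc.three_le_length, getVert_fin_injective_of_isCycle hc, cyclicPairs_getVert_subset c⟩,
    ⟨hd.three_le_length, getVert_fin_injective_of_isCycle hd, cyclicPairs_getVert_subset d⟩, ?_⟩
  rw [← coe_injective.ne_iff, coe_cyclicPairs_getVert, coe_cyclicPairs_getVert]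
  exact toFinset_sym2_injective.image_injective.ne hne

end PairGraph

section EvenWalk

variable {V : Type*} [DecidableEq V] {q s : ℕ} {e : Fin q → Finset V} {α β : Fin s → Fin q}

theorem walkDeg_pos_iff {x : V} : 0 < walkDeg e α x ↔ ∃ t, x ∈ e (α t) := by
  simp [walkDeg, Finset.card_pos, Finset.Nonempty]

theorem coe_walkEdges : (walkEdges e α β : Set (Finset V)) =
    Set.range (fun t => e (α t)) ∪ Set.range (fun t => e (β t)) := by
  simp [walkEdges]

theorem IsEvenWalk.symm (h : IsEvenWalk e α β) : IsEvenWalk e β α :=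
  ⟨h.1, h.2.1.symm, fun j hj i hi => (h.2.2 i hi j hj).symm⟩

theorem IsEvenWalk.exists_walkDeg_le (h : IsEvenWalk e α β) (t t' : Fin s) :
    ∃ z ∈ e (α t), z ∉ e (β t') ∧ walkDeg e α z ≤ walkDeg e β z := by
  obtain ⟨z, hz, hdeg⟩ := Set.not_subset.1 (h.2.2 (α t) ⟨t, rfl⟩ (β t') ⟨t', rfl⟩).1
  rw [mem_coe, mem_sdiff] at hz
  exact ⟨z, hz.1, hz.2, not_lt.1 hdeg⟩

theorem IsEvenWalk.disjoint_range (h : IsEvenWalk e α β) :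
    Disjoint (Set.range fun t => e (α t)) (Set.range fun t => e (β t)) := by
  rw [Set.disjoint_left]
  rintro _ ⟨t, rfl⟩ ⟨t', ht'⟩
  obtain ⟨z, hzα, hzβ, -⟩ := h.exists_walkDeg_le t t'
  exact hzβ (ht'.symm.subset hzα)

theorem IsEvenWalk.exists_mem_right (h : IsEvenWalk e α β) {x : V} {t : Fin s}
    (hcard : #(e (α t)) = 2) (hx : x ∈ e (α t)) : ∃ t', x ∈ e (β t') := by
  by_contra hno
  have hxβ : ¬ 0 < walkDeg e β x := mt walkDeg_pos_iff.1 hno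
  obtain ⟨y, -, hxy⟩ := exists_eq_pair_of_mem_of_card_eq_two hx hcard
  have hpos {z : V} (hz : z ∈ e (α t)) : 0 < walkDeg e α z := walkDeg_pos_iff.2 ⟨t, hz⟩
  -- The vertex witnessing the even walk condition cannot be `x`, so it is always `y`.
  have hy (t' : Fin s) : y ∉ e (β t') ∧ walkDeg e α y ≤ walkDeg e β y := by
    obtain ⟨z, hz, hzβ, hdeg⟩ := h.exists_walkDeg_le t t'
    have hzx : z ≠ x := by
      rintro rfl
      exact hxβ ((hpos hz).trans_le hdeg)
    obtain rfl : z = y := by simpa [hxy, hzx] using hz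
    exact ⟨hzβ, hdeg⟩
  have hyα : y ∈ e (α t) := by simp [hxy]
  obtain ⟨t', ht'⟩ := walkDeg_pos_iff.1 ((hpos hyα).trans_le (hy t).2)
  exact (hy t').1 ht'

theorem mem_support_pairGraph_range (hcard : ∀ t, #(e (α t)) = 2) {x : V} :
    x ∈ (pairGraph (Set.range fun t => e (α t))).support ↔ ∃ t, x ∈ e (α t) := by
  rw [mem_support_pairGraph (Set.forall_mem_range.2 hcard), Set.exists_range_iff]

theorem IsEvenWalk.support_pairGraph_eq (h : IsEvenWalk e α β) (hα : ∀ t, #(e (α t)) = 2)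
    (hβ : ∀ t, #(e (β t)) = 2) :
    (pairGraph (Set.range fun t => e (α t))).support =
      (pairGraph (Set.range fun t => e (β t))).support := by
  ext x
  rw [mem_support_pairGraph_range hα, mem_support_pairGraph_range hβ]
  exact ⟨fun ⟨t, hx⟩ => h.exists_mem_right (hα t) hx,
    fun ⟨t, hx⟩ => h.symm.exists_mem_right (hβ t) hx⟩

theorem IsEvenWalk.isEvenCycle_or_hasTwoCycles (h : IsEvenWalk e α β)
    (hα : ∀ t, #(e (α t)) = 2) (hβ : ∀ t, #(e (β t)) = 2) :
    IsEvenCycle (pairGraph (walkEdges e α β : Set (Finset V))) ∨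
      HasTwoCycles (pairGraph (walkEdges e α β : Set (Finset V))) := by
  have t : Fin s := ⟨0, Nat.zero_lt_of_lt h.1⟩
  obtain ⟨x, hx⟩ : (e (α t)).Nonempty := card_pos.1 (hα t ▸ Nat.two_pos)
  rw [coe_walkEdges, pairGraph_union]
  exact _root_.isEvenCycle_or_hasTwoCycles (disjoint_pairGraph h.disjoint_range)
    (h.support_pairGraph_eq hα hβ) (finite_support_pairGraph (Set.finite_range _))
    ⟨x, (mem_support_pairGraph_range hα).2 ⟨t, hx⟩⟩

end EvenWalk

theorem stmt11_general {V : Type*} [DecidableEq V] {q s : ℕ} (e : Fin q → Finset V)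
    (hcard : ∀ i, #(e i) = 2) (α β : Fin s → Fin q) (h : IsEvenWalk e α β) :
    (∃ (m : ℕ) (x : Fin m → V), 3 ≤ m ∧ Even m ∧ Function.Injective x ∧
        walkEdges e α β = cyclicPairs x) ∨
    (∃ (m₁ : ℕ) (x₁ : Fin m₁ → V) (m₂ : ℕ) (x₂ : Fin m₂ → V),
        (3 ≤ m₁ ∧ Function.Injective x₁ ∧ cyclicPairs x₁ ⊆ walkEdges e α β) ∧
        (3 ≤ m₂ ∧ Function.Injective x₂ ∧ cyclicPairs x₂ ⊆ walkEdges e α β) ∧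
        cyclicPairs x₁ ≠ cyclicPairs x₂) := by
  have hE : ∀ p ∈ walkEdges e α β, #p = 2 := by
    simp [walkEdges, or_imp, forall_and, hcard]
  exact (h.isEvenCycle_or_hasTwoCycles (hcard <| α ·) (hcard <| β ·)).imp
    (·.exists_cyclicPairs hE) (·.exists_cyclicPairs)

theorem stmt11 {V : Type*} [DecidableEq V] {q s : ℕ} (e : Fin q → Finset V)
    (hcard : ∀ i, (e i).card = 2) (hinj : Function.Injective e)
    (α β : Fin s → Fin q) (h : IsEvenWalk e α β)
    (hconn : ∀ u v : V, u ∈ walkVerts e α β → v ∈ walkVerts e α β →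
        Relation.ReflTransGen (walkAdj e α β) u v) :
    (∃ (m : ℕ) (x : Fin m → V), 3 ≤ m ∧ Even m ∧ Function.Injective x ∧
        walkEdges e α β =
          Finset.univ.image fun t : Fin m => ({x t, x (cyclicNext t)} : Finset V)) ∨
    (∃ (m₁ : ℕ) (x₁ : Fin m₁ → V) (m₂ : ℕ) (x₂ : Fin m₂ → V),
        (3 ≤ m₁ ∧ Function.Injective x₁ ∧
          (Finset.univ.image fun t : Fin m₁ => ({x₁ t, x₁ (cyclicNext t)} : Finset V)) ⊆
            walkEdges e α β) ∧
        (3 ≤ m₂ ∧ Function.Injective x₂ ∧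
          (Finset.univ.image fun t : Fin m₂ => ({x₂ t, x₂ (cyclicNext t)} : Finset V)) ⊆
            walkEdges e α β) ∧
        (Finset.univ.image fun t : Fin m₁ => ({x₁ t, x₁ (cyclicNext t)} : Finset V)) ≠
          (Finset.univ.image fun t : Fin m₂ => ({x₂ t, x₂ (cyclicNext t)} : Finset V))) :=
  stmt11_general e hcard α β h
end

section
/- Let G be a simple graph which is either a tree (connected and acyclic) or contains a unique cycle and that cycle has odd length. Then the edge ideal I(G) ⊆ K[x_1,…,x_n] is of linear type. -/
open Finset MvPolynomial

/-- The squarefree monomial `f_i = ∏_{x ∈ F_i} x` of a facet `F_i`. -/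
noncomputable def facetMonomial (K : Type*) [Field K] {n q : ℕ}
    (F : Fin q → Finset (Fin n)) (i : Fin q) : MvPolynomial (Fin n) K :=
  ∏ x ∈ F i, X x

/-- The `R`-algebra map `ψ : S = R[T_1,…,T_q] → R[t]`, `T_i ↦ f_i·t`. -/
noncomputable def reesHom (K : Type*) [Field K] {n q : ℕ} (F : Fin q → Finset (Fin n)) :
    MvPolynomial (Fin q) (MvPolynomial (Fin n) K) →ₐ[MvPolynomial (Fin n) K]
      Polynomial (MvPolynomial (Fin n) K) :=
  aeval fun i : Fin q => Polynomial.C (facetMonomial K F i) * Polynomial.X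

/-- The defining ideal `J = ker ψ` of the Rees algebra `R[It]`. -/
noncomputable def reesIdeal (K : Type*) [Field K] {n q : ℕ} (F : Fin q → Finset (Fin n)) :
    Ideal (MvPolynomial (Fin q) (MvPolynomial (Fin n) K)) :=
  RingHom.ker (reesHom K F)

/-- The ideal generated by the facet monomials is of linear type: its Rees ideal `J`
is generated by its elements that are homogeneous of degree `1` in `T_1,…,T_q`. -/
def IsLinearType (K : Type*) [Field K] {n q : ℕ} (F : Fin q → Finset (Fin n)) : Prop :=
  reesIdeal K F = Ideal.span {g | g ∈ reesIdeal K F ∧ g.IsHomogeneous 1}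

/-- A cycle in the graph with edges `e i`: an injective cyclic list of `m ≥ 3`
vertices whose consecutive pairs are edges of the graph. -/
def IsCycleIn {n q : ℕ} (e : Fin q → Finset (Fin n)) {m : ℕ} (x : Fin m → Fin n) : Prop :=
  3 ≤ m ∧ Function.Injective x ∧
    ∀ t : Fin m, ∃ i : Fin q, e i = {x t, x (cyclicNext t)}

/-!
The kernel of `ψ` is spanned by the binomials `x^a T^b - x^c T^d` with `deg b = deg d` whose two
terms have the same image. Suppose `T_i` divides `T^b`, `T_j` divides `T^d` and the edge
monomial `f_j` divides `x^a f_i`. Then a linear relation replaces `T_i` by `T_j` in the first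
term, and induction on the degree applies. If no such exchange exists on either side, then, an
edge having only two ends, `x^a` is coprime to every edge of `T^d` and `x^c` to every edge of
`T^b`. This forces `∏ f_i^(b_i) = ∏ f_i^(d_i)`, so `b = d` once the incidence vectors of the
edges are linearly independent, and `i = j` is an exchange after all.

An edge is independent of the others as soon as some weight on the vertices sums to zero along
every other edge but not along it. In a forest every edge is a bridge, and the signs of a
2-colouring on one side of the bridge are such a weight. If all cycles pass through one edge and
one of them is odd, the graph without that edge is a forest whose 2-colouring gives both ends of
the edge the same sign.
-/

section LinearAlgebra

variable {R M N ι κ : Type*} [Ring R] [AddCommGroup M] [Module R M] [AddCommMonoid N] [Module R N]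

lemma ker_le_of_basis_sub_mem (b : Module.Basis ι R M) (c : Module.Basis κ R N) {f : M →ₗ[R] N}
    {φ : ι → κ} (hf : ∀ i, f (b i) = c (φ i)) {L : Submodule R M}
    (hL : ∀ i j, φ i = φ j → b i - b j ∈ L) : LinearMap.ker f ≤ L := by
  have hφ : (fun i => L.mkQ (b i)).FactorsThrough φ := fun i j hij =>
    (Submodule.Quotient.eq L).2 (hL i j hij)
  -- A left inverse of `f` modulo `L`: it sends `c k` to the class of any `b i` with `φ i = k`.
  let σ : N →ₗ[R] M ⧸ L := c.constr ℕ (Function.extend φ (fun i => L.mkQ (b i)) 0)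
  have hσ : σ ∘ₗ f = L.mkQ := b.ext fun i => by
    rw [LinearMap.comp_apply, hf, c.constr_basis, hφ.extend_apply]
  calc LinearMap.ker f ≤ LinearMap.ker (σ ∘ₗ f) := LinearMap.ker_le_ker_comp f σ
    _ = L := by rw [hσ, L.ker_mkQ]

end LinearAlgebra

section CharVec

variable {V ι : Type*}

/-- The characteristic vector of a finite set of vertices. Over `ℕ` it is the exponent vector of a
squarefree monomial, over `ℚ` a column of an incidence matrix. -/
noncomputable def charVec (R : Type*) [Semiring R] (s : Finset V) : V →₀ R :=
  ∑ v ∈ s, Finsupp.single v 1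

lemma charVec_apply (R : Type*) [Semiring R] [DecidableEq V] (s : Finset V) (v : V) :
    charVec R s v = if v ∈ s then 1 else 0 := by
  simp [charVec, Finsupp.finsetSum_apply, Finsupp.single_apply]

lemma linearCombination_charVec {R : Type*} [Semiring R] (w : V → R) (s : Finset V) :
    Finsupp.linearCombination R w (charVec R s) = ∑ v ∈ s, w v := by
  simp [charVec]

lemma linearIndependent_nat_charVec {R : Type*} [Semiring R] [CharZero R] {F : ι → Finset V}
    (h : LinearIndependent R fun i => charVec R (F i)) :
    LinearIndependent ℕ fun i => charVec ℕ (F i) := by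
  refine .of_comp (Finsupp.mapRange.addMonoidHom (Nat.castAddMonoidHom R)).toNatLinearMap ?_
  convert h.restrict_scalars (R := ℕ) (by simpa using Nat.cast_injective) using 2 with i
  simp [charVec]

/-- The exponent vector of a product of squarefree monomials with supports `F i`, taken with
multiplicities `b i`. -/
noncomputable def exponentMap (F : ι → Finset V) : (ι →₀ ℕ) →ₗ[ℕ] V →₀ ℕ :=
  Finsupp.linearCombination ℕ fun i => charVec ℕ (F i)

@[simp]
lemma exponentMap_single_one (F : ι → Finset V) (i : ι) :
    exponentMap F (Finsupp.single i 1) = charVec ℕ (F i) := by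
  simp [exponentMap]

lemma exponentMap_apply_ne_zero_iff {F : ι → Finset V} {b : ι →₀ ℕ} {v : V} :
    exponentMap F b v ≠ 0 ↔ ∃ i ∈ b.support, v ∈ F i := by
  classical
  suffices (∃ i, b i ≠ 0 ∧ v ∈ F i ∧ b i ≠ 0) ↔ ∃ i, b i ≠ 0 ∧ v ∈ F i by
    simpa [exponentMap, Finsupp.linearCombination_apply, Finsupp.sum, Finsupp.finsetSum_apply,
      charVec_apply]
  tauto

end CharVec

section Exchange

variable {V ι : Type*} {e : ι → Finset V} {a c : V →₀ ℕ} {b d : ι →₀ ℕ}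

lemma exists_charVec_le_of_apply_ne_zero (hcard : ∀ i, (e i).card = 2) (hb : b ≠ 0)
    (h : a + exponentMap e b = c + exponentMap e d) {u : V} (hau : a u ≠ 0)
    (hdu : exponentMap e d u ≠ 0) :
    ∃ i ∈ b.support, ∃ j ∈ d.support, charVec ℕ (e j) ≤ a + charVec ℕ (e i) := by
  classical
  obtain ⟨j, hj, huj⟩ := exponentMap_apply_ne_zero_iff.1 hdu
  obtain ⟨v, hv⟩ : ∃ v, (e j).erase u = {v} := by
    rw [← Finset.card_eq_one, Finset.card_erase_of_mem huj, hcard]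
  have hdv : exponentMap e d v ≠ 0 := exponentMap_apply_ne_zero_iff.2
    ⟨j, hj, Finset.mem_of_mem_erase (hv ▸ Finset.mem_singleton_self v)⟩
  obtain ⟨i, hi, hiv⟩ : ∃ i ∈ b.support, a v ≠ 0 ∨ v ∈ e i := by
    by_cases hav : a v = 0
    · have hbv : exponentMap e b v ≠ 0 := by
        have := DFunLike.congr_fun h v
        simp only [Finsupp.add_apply] at this
        omega
      obtain ⟨i, hi, hvi⟩ := exponentMap_apply_ne_zero_iff.1 hbv
      exact ⟨i, hi, .inr hvi⟩
    · obtain ⟨i, hi⟩ := Finsupp.support_nonempty_iff.2 hb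
      exact ⟨i, hi, .inl hav⟩
  refine ⟨i, hi, j, hj, fun w => ?_⟩
  rw [← Finset.insert_erase huj, hv, Finsupp.add_apply, charVec_apply, charVec_apply]
  grind

lemma exists_exchange (hcard : ∀ i, (e i).card = 2)
    (hind : LinearIndependent ℕ fun i => charVec ℕ (e i)) (hb : b ≠ 0) (hd : d ≠ 0)
    (h : a + exponentMap e b = c + exponentMap e d) :
    ∃ i ∈ b.support, ∃ j ∈ d.support,
      charVec ℕ (e j) ≤ a + charVec ℕ (e i) ∨ charVec ℕ (e i) ≤ c + charVec ℕ (e j) := by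
  by_contra! hno
  have had (v) (ha : a v ≠ 0) : exponentMap e d v = 0 := by
    by_contra hdv
    obtain ⟨i, hi, j, hj, hle⟩ := exists_charVec_le_of_apply_ne_zero hcard hb h ha hdv
    exact (hno i hi j hj).1 hle
  have hcb (v) (hc : c v ≠ 0) : exponentMap e b v = 0 := by
    by_contra hbv
    obtain ⟨j, hj, i, hi, hle⟩ := exists_charVec_le_of_apply_ne_zero hcard hd h.symm hc hbv
    exact (hno i hi j hj).2 hle
  have hbd : b = d := hind <| Finsupp.ext fun v => by
    have hv := DFunLike.congr_fun h v
    have := had v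
    have := hcb v
    simp only [Finsupp.add_apply] at hv
    change exponentMap e b v = exponentMap e d v
    omega
  subst hbd
  obtain ⟨i, hi⟩ := Finsupp.support_nonempty_iff.2 hb
  exact (hno i hi i hi).1 (self_le_add_left _ _)

end Exchange

section ReesIdeal

variable {K : Type*} [Field K] {n q : ℕ} {F : Fin q → Finset (Fin n)}

lemma facetMonomial_eq_monomial (F : Fin q → Finset (Fin n)) (i : Fin q) :
    facetMonomial K F i = monomial (charVec ℕ (F i)) 1 := by
  rw [charVec, monomial_sum_one]
  rfl

lemma reesHom_monomial_one (F : Fin q → Finset (Fin n)) (b : Fin q →₀ ℕ) :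
    reesHom K F (monomial b 1) = Polynomial.monomial b.degree (monomial (exponentMap F b) 1) := by
  induction b using Finsupp.induction_linear with
  | zero => simp
  | add f g hf hg =>
    rw [← one_mul (1 : MvPolynomial (Fin n) K), ← monomial_mul, map_mul, hf, hg,
      Polynomial.monomial_mul_monomial, monomial_mul, map_add, map_add, one_mul]
  | single i m =>
    simp [reesHom, facetMonomial_eq_monomial, exponentMap, Polynomial.C_mul_X_eq_monomial,
      Polynomial.monomial_pow, monomial_pow, aeval_monomial]

/-- The monomial `x ^ a * T ^ b` of the polynomial ring in variables `T` over the polynomial ring in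
variables `x`. -/
noncomputable def reesMonomial (K : Type*) [CommSemiring K] {σ τ : Type*} (a : σ →₀ ℕ)
    (b : τ →₀ ℕ) : MvPolynomial τ (MvPolynomial σ K) :=
  monomial b (monomial a 1)

lemma reesMonomial_mul {K σ τ : Type*} [CommSemiring K] (a a' : σ →₀ ℕ) (b b' : τ →₀ ℕ) :
    reesMonomial K a b * reesMonomial K a' b' = reesMonomial K (a + a') (b + b') := by
  simp [reesMonomial, monomial_mul]

lemma reesHom_reesMonomial (F : Fin q → Finset (Fin n)) (a : Fin n →₀ ℕ) (b : Fin q →₀ ℕ) :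
    reesHom K F (reesMonomial K a b) =
      Polynomial.monomial b.degree (monomial (a + exponentMap F b) 1) := by
  rw [reesMonomial, ← mul_one (monomial a 1), ← smul_eq_mul, ← smul_monomial, map_smul,
    reesHom_monomial_one, Polynomial.smul_monomial, smul_eq_mul, monomial_mul, one_mul]

lemma reesIdeal_le_of_reesMonomial_sub_mem
    {L : Ideal (MvPolynomial (Fin q) (MvPolynomial (Fin n) K))}
    (hL : ∀ a c b d, b.degree = d.degree → a + exponentMap F b = c + exponentMap F d →
      reesMonomial K a b - reesMonomial K c d ∈ L) :
    reesIdeal K F ≤ L := by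
  let B := (basisMonomials (Fin n) K).smulTower (basisMonomials (Fin q) (MvPolynomial (Fin n) K))
  let B' := (basisMonomials (Fin n) K).smulTower
    (Polynomial.basisMonomials (MvPolynomial (Fin n) K))
  have hB (p) : B p = reesMonomial K p.1 p.2 := by
    simp [B, reesMonomial, Module.Basis.smulTower_apply, smul_monomial]
  have hB' (p) : B' p = Polynomial.monomial p.2 (monomial p.1 1) := by
    simp [B', Module.Basis.smulTower_apply, Polynomial.smul_monomial]
  refine ker_le_of_basis_sub_mem B B' (f := (reesHom K F).toLinearMap.restrictScalars K)
    (φ := fun p => (p.1 + exponentMap F p.2, p.2.degree)) (L := L.restrictScalars K)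
    (fun p => ?_) fun p p' hp => ?_
  · simp only [hB, hB']
    exact reesHom_reesMonomial F p.1 p.2
  · rw [hB, hB]
    exact hL _ _ _ _ (congrArg Prod.snd hp) (congrArg Prod.fst hp)

/-- The ideal of linear relations, generated by the elements of the Rees ideal that are linear in
the `T_i`; linear type means that it is the whole Rees ideal. -/
noncomputable def linearReesIdeal (K : Type*) [Field K] {n q : ℕ} (F : Fin q → Finset (Fin n)) :
    Ideal (MvPolynomial (Fin q) (MvPolynomial (Fin n) K)) :=
  Ideal.span {g | g ∈ reesIdeal K F ∧ g.IsHomogeneous 1}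

lemma reesMonomial_single_sub_mem_linearReesIdeal {a c : Fin n →₀ ℕ} {i j : Fin q}
    (h : a + charVec ℕ (F i) = c + charVec ℕ (F j)) :
    reesMonomial K a (Finsupp.single i 1) - reesMonomial K c (Finsupp.single j 1) ∈
      linearReesIdeal K F := by
  refine Ideal.subset_span ⟨?_, ?_⟩
  · rw [reesIdeal, RingHom.mem_ker, map_sub, reesHom_reesMonomial, reesHom_reesMonomial,
      exponentMap_single_one, exponentMap_single_one, h, Finsupp.degree_single,
      Finsupp.degree_single, sub_self]
  · exact (isHomogeneous_monomial _ (Finsupp.degree_single _ _)).sub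
      (isHomogeneous_monomial _ (Finsupp.degree_single _ _))

-- Modulo the linear relation `x^a T_i ≡ x^a' T_j`, the binomial acquires the common factor `T_j`,
-- and cancelling it lowers the degree in `T`.
lemma reesMonomial_sub_mem_linearReesIdeal_of_le {a c : Fin n →₀ ℕ} {b d : Fin q →₀ ℕ}
    {i j : Fin q}
    (hij : charVec ℕ (F j) ≤ a + charVec ℕ (F i))
    (h : a + exponentMap F (b + Finsupp.single i 1) = c + exponentMap F (d + Finsupp.single j 1))
    (ih : ∀ a', a' + exponentMap F b = c + exponentMap F d →
      reesMonomial K a' b - reesMonomial K c d ∈ linearReesIdeal K F) :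
    reesMonomial K a (b + Finsupp.single i 1) - reesMonomial K c (d + Finsupp.single j 1) ∈
      linearReesIdeal K F := by
  obtain ⟨a', ha'⟩ := le_iff_exists_add'.1 hij
  have hrec : a' + exponentMap F b = c + exponentMap F d := by
    simp only [map_add, exponentMap_single_one] at h
    refine add_right_cancel (b := charVec ℕ (F j)) ?_
    rw [add_right_comm, ← ha', add_assoc c, ← h, add_right_comm, add_assoc]
  convert add_mem
    (Ideal.mul_mem_left _ (reesMonomial K 0 b) (reesMonomial_single_sub_mem_linearReesIdeal ha'))
    (Ideal.mul_mem_left _ (reesMonomial K 0 (Finsupp.single j 1)) (ih a' hrec)) using 1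
  simp only [mul_sub, reesMonomial_mul, zero_add, add_comm (Finsupp.single j 1), sub_add_sub_cancel]

lemma reesMonomial_sub_mem_linearReesIdeal {e : Fin q → Finset (Fin n)}
    (hcard : ∀ i, (e i).card = 2) (hind : LinearIndependent ℕ fun i => charVec ℕ (e i))
    {a c : Fin n →₀ ℕ} {b d : Fin q →₀ ℕ}
    (hdeg : b.degree = d.degree) (h : a + exponentMap e b = c + exponentMap e d) :
    reesMonomial K a b - reesMonomial K c d ∈ linearReesIdeal K e := by
  induction hk : b.degree generalizing a b c d with
  | zero =>
    obtain rfl : b = 0 := (Finsupp.degree_eq_zero_iff b).1 hk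
    obtain rfl : d = 0 := (Finsupp.degree_eq_zero_iff d).1 (by rw [← hdeg, hk])
    obtain rfl : a = c := by simpa using h
    simp
  | succ k ih =>
    have hb : b ≠ 0 := by rintro rfl; simp at hk
    have hd : d ≠ 0 := by rintro rfl; simp [hk] at hdeg
    obtain ⟨i, hi, j, hj, hij⟩ := exists_exchange hcard hind hb hd h
    obtain ⟨b, rfl⟩ : ∃ b', b = b' + Finsupp.single i 1 :=
      ⟨_, (Finsupp.sub_add_single_one_cancel (Finsupp.mem_support_iff.1 hi)).symm⟩
    obtain ⟨d, rfl⟩ : ∃ d', d = d' + Finsupp.single j 1 :=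
      ⟨_, (Finsupp.sub_add_single_one_cancel (Finsupp.mem_support_iff.1 hj)).symm⟩
    simp only [map_add, Finsupp.degree_single, add_left_inj] at hdeg hk
    rcases hij with hij | hij
    · exact reesMonomial_sub_mem_linearReesIdeal_of_le hij h fun a' h' => ih hdeg h' hk
    · rw [← neg_sub, neg_mem_iff]
      exact reesMonomial_sub_mem_linearReesIdeal_of_le hij h.symm fun c' h' =>
        ih hdeg.symm h' (hdeg ▸ hk)

theorem isLinearType_of_linearIndependent {e : Fin q → Finset (Fin n)}
    (hcard : ∀ i, (e i).card = 2) (hind : LinearIndependent ℕ fun i => charVec ℕ (e i)) :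
    IsLinearType K e :=
  le_antisymm
    (reesIdeal_le_of_reesMonomial_sub_mem fun _ _ _ _ =>
      reesMonomial_sub_mem_linearReesIdeal hcard hind)
    (Ideal.span_le.2 fun _ hg => hg.1)

end ReesIdeal

section IncidenceVectors

variable {V ι : Type*} [DecidableEq V] {k : Type*} [Field k] {G H : SimpleGraph V} {u w : V}

lemma charVec_notMem_span_image_edgeSet {φ : V → k} (hφ : ∀ x y, H.Adj x y → φ x + φ y = 0)
    (huw : u ≠ w) (hne : φ u + φ w ≠ 0) :
    charVec k s(u, w).toFinset ∉
      Submodule.span k ((fun s : Sym2 V => charVec k s.toFinset) '' H.edgeSet) := by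
  have hpair {x y : V} (hxy : x ≠ y) :
      Finsupp.linearCombination k φ (charVec k s(x, y).toFinset) = φ x + φ y := by
    rw [linearCombination_charVec, Sym2.toFinset_mk_eq, Finset.sum_pair hxy]
  have hspan : Submodule.span k ((fun s : Sym2 V => charVec k s.toFinset) '' H.edgeSet) ≤
      LinearMap.ker (Finsupp.linearCombination k φ) := by
    rw [Submodule.span_le, Set.image_subset_iff]
    rintro ⟨x, y⟩ hxy
    have hxy : H.Adj x y := hxy
    exact (hpair hxy.ne).trans (hφ x y hxy)
  exact fun hmem => hne (hpair huw ▸ hspan hmem)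

lemma linearIndepOn_edgeSet_of_isAcyclic (k : Type*) [Field k] (hG : G.IsAcyclic) :
    LinearIndepOn k (fun s : Sym2 V => charVec k s.toFinset) G.edgeSet := by
  classical
  let C : G.Coloring ℤˣ := hG.isBipartite.toColoring (by simp)
  rw [linearIndepOn_iff_notMem_span]
  rintro ⟨u, w⟩ huw
  have huw : G.Adj u w := huw
  let H := G.deleteEdges {s(u, w)}
  have hbridge : ¬ H.Reachable u w := SimpleGraph.isAcyclic_iff_forall_adj_isBridge.1 hG huw
  have hC : ((C u : ℤ) : k) ≠ 0 := by
    rcases Int.units_eq_one_or (C u) with h | h <;> simp [h]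
  rw [← SimpleGraph.edgeSet_deleteEdges]
  refine charVec_notMem_span_image_edgeSet
    (φ := fun v => if H.Reachable u v then ((C v : ℤ) : k) else 0) (fun x y hxy => ?_) huw.ne ?_
  · have hCxy := Int.units_ne_iff_eq_neg.1 (C.valid (SimpleGraph.deleteEdges_le _ hxy))
    have hiff : H.Reachable u x ↔ H.Reachable u y :=
      ⟨fun h => h.trans hxy.reachable, fun h => h.trans hxy.symm.reachable⟩
    simp only [hiff, hCxy]
    split_ifs <;> simp
  · simpa [hbridge] using hC

lemma linearIndepOn_edgeSet_of_not_isBipartite (h2 : (2 : k) ≠ 0) (huw : G.Adj u w)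
    (hacyc : (G.deleteEdges {s(u, w)}).IsAcyclic) (hG : ¬ G.IsBipartite) :
    LinearIndepOn k (fun s : Sym2 V => charVec k s.toFinset) G.edgeSet := by
  let C : (G.deleteEdges {s(u, w)}).Coloring ℤˣ := hacyc.isBipartite.toColoring (by simp)
  have hCuw : C u = C w := by
    by_contra hne
    refine hG (SimpleGraph.Coloring.mk C fun {x y} hxy => ?_ : G.Coloring ℤˣ).colorable
    by_cases hs : s(x, y) = s(u, w)
    · rcases Sym2.eq_iff.1 hs with ⟨rfl, rfl⟩ | ⟨rfl, rfl⟩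
      exacts [hne, Ne.symm hne]
    · exact C.valid (SimpleGraph.deleteEdges_adj.2 ⟨hxy, hs⟩)
  have hCu : ((C u : ℤ) : k) + ((C u : ℤ) : k) ≠ 0 := by
    rcases Int.units_eq_one_or (C u) with h | h <;> simp [h, ← two_mul, h2]
  have hind := linearIndepOn_edgeSet_of_isAcyclic k hacyc
  rw [← Set.insert_sdiff_self_of_mem (G.mem_edgeSet.2 huw), ← SimpleGraph.edgeSet_deleteEdges]
  refine hind.insert (charVec_notMem_span_image_edgeSet (φ := fun v => ((C v : ℤ) : k))
    (fun x y hxy => ?_) huw.ne (by rwa [← hCuw]))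
  rw [Int.units_ne_iff_eq_neg.1 (C.valid hxy)]
  simp

/-- The simple graph on `V` whose edges are the two-element members of the family `e`. -/
def edgeGraph (e : ι → Finset V) : SimpleGraph V :=
  SimpleGraph.fromEdgeSet {s | s.toFinset ∈ Set.range e}

lemma edgeGraph_adj {e : ι → Finset V} :
    (edgeGraph e).Adj u w ↔ (∃ i, e i = {u, w}) ∧ u ≠ w := by
  simp [edgeGraph, Sym2.toFinset_mk_eq]

lemma linearIndependent_charVec_of_edgeSet {e : ι → Finset V} (hcard : ∀ i, (e i).card = 2)
    (hinj : Function.Injective e)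
    (h : LinearIndepOn k (fun s : Sym2 V => charVec k s.toFinset) (edgeGraph e).edgeSet) :
    LinearIndependent k fun i => charVec k (e i) := by
  have hedge (i : ι) : ∃ s ∈ (edgeGraph e).edgeSet, s.toFinset = e i := by
    obtain ⟨u, w, huw, hi⟩ := Finset.card_eq_two.1 (hcard i)
    exact ⟨s(u, w), edgeGraph_adj.2 ⟨⟨i, hi⟩, huw⟩, by rw [Sym2.toFinset_mk_eq, hi]⟩
  choose s hs hse using hedge
  have hsinj : Function.Injective s := fun i j hij => hinj (by rw [← hse i, ← hse j, hij])
  simp only [← hse]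
  exact LinearIndependent.comp h (Set.codRestrict s _ hs) (hsinj.codRestrict hs)

end IncidenceVectors

section Cycles

lemma cycleGraph_adj_iff_cyclicNext {m : ℕ} (hm : 2 ≤ m) {s t : Fin m} :
    (SimpleGraph.cycleGraph m).Adj s t ↔ t = cyclicNext s ∨ s = cyclicNext t := by
  obtain ⟨m, rfl⟩ := Nat.exists_eq_add_of_le' hm
  have hnext (r : Fin (m + 2)) : cyclicNext r = r + 1 := by
    simp [Fin.ext_iff, cyclicNext, Fin.val_add]
  rw [SimpleGraph.cycleGraph_adj, hnext, hnext, or_comm, sub_eq_iff_eq_add', sub_eq_iff_eq_add']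

variable {n q : ℕ} {e : Fin q → Finset (Fin n)} {m : ℕ} {x : Fin m → Fin n}

lemma isCycleIn_iff :
    IsCycleIn e x ↔ 3 ≤ m ∧ Function.Injective x ∧
      ∀ t, (edgeGraph e).Adj (x t) (x (cyclicNext t)) := by
  refine and_congr_right fun hm => and_congr_right fun hx => forall_congr' fun t => ?_
  have hnext : t ≠ cyclicNext t :=
    ((cycleGraph_adj_iff_cyclicNext (by lia)).2 (.inl rfl) : (SimpleGraph.cycleGraph m).Adj _ _).ne
  rw [edgeGraph_adj, and_iff_left (hx.ne hnext)]

lemma isAcyclic_of_forall_isCycleIn {H : SimpleGraph (Fin n)} (hH : H ≤ edgeGraph e)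
    (h : ∀ (m : ℕ) (x : Fin m → Fin n), IsCycleIn e x → ∃ t, ¬ H.Adj (x t) (x (cyclicNext t))) :
    H.IsAcyclic := by
  rw [SimpleGraph.isAcyclic_iff_free_cycleGraph]
  rintro m hm ⟨f⟩
  have hf (t) : H.Adj (f t) (f (cyclicNext t)) :=
    f.toHom.map_adj ((cycleGraph_adj_iff_cyclicNext (by lia)).2 (.inl rfl))
  obtain ⟨t, ht⟩ := h m f (isCycleIn_iff.2 ⟨hm, f.injective, fun t => hH (hf t)⟩)
  exact ht (hf t)

lemma IsCycleIn.not_isBipartite (hx : IsCycleIn e x) (hm : Odd m) :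
    ¬ (edgeGraph e).IsBipartite := by
  obtain ⟨hm3, -, hadj⟩ := isCycleIn_iff.1 hx
  let f : SimpleGraph.cycleGraph m →g edgeGraph e := ⟨x, fun {s t} hst => by
    rcases (cycleGraph_adj_iff_cyclicNext (by lia)).1 hst with rfl | rfl
    exacts [hadj s, (hadj t).symm]⟩
  intro h
  have hle := (h.of_hom f).chromaticNumber_le
  rw [SimpleGraph.chromaticNumber_cycleGraph_of_odd m (by lia) hm] at hle
  exact absurd hle (by decide)

lemma isAcyclic_deleteEdges_of_forall_isCycleIn {u w : Fin n}
    (h : ∀ (m : ℕ) (x : Fin m → Fin n), IsCycleIn e x →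
      ∃ t, ({x t, x (cyclicNext t)} : Finset (Fin n)) = {u, w}) :
    ((edgeGraph e).deleteEdges {s(u, w)}).IsAcyclic := by
  refine isAcyclic_of_forall_isCycleIn (SimpleGraph.deleteEdges_le _) fun m x hx => ?_
  obtain ⟨t, ht⟩ := h m x hx
  refine ⟨t, fun hadj => (SimpleGraph.deleteEdges_adj.1 hadj).2 ?_⟩
  exact Sym2.ext fun v => by simpa using Finset.ext_iff.1 ht v

end Cycles

theorem stmt18_general {K : Type*} [Field K] {n q : ℕ} (e : Fin q → Finset (Fin n))
    (hcard : ∀ i, (e i).card = 2) (hinj : Function.Injective e)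
    (hG : (¬ ∃ (m : ℕ) (x : Fin m → Fin n), IsCycleIn e x) ∨
      (∃ (m : ℕ) (x : Fin m → Fin n), IsCycleIn e x ∧ Odd m ∧
        ∀ (m' : ℕ) (x' : Fin m' → Fin n), IsCycleIn e x' →
          (Finset.univ.image fun t : Fin m' =>
              ({x' t, x' (cyclicNext t)} : Finset (Fin n))) =
            (Finset.univ.image fun t : Fin m =>
              ({x t, x (cyclicNext t)} : Finset (Fin n))))) :
    IsLinearType K e := by
  suffices h : LinearIndepOn ℚ (fun s : Sym2 (Fin n) => charVec ℚ s.toFinset)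
      (edgeGraph e).edgeSet from
    isLinearType_of_linearIndependent hcard <|
      linearIndependent_nat_charVec (linearIndependent_charVec_of_edgeSet hcard hinj h)
  rcases hG with hacyc | ⟨m, x, hx, hm, huniq⟩
  · exact linearIndepOn_edgeSet_of_isAcyclic ℚ <|
      isAcyclic_of_forall_isCycleIn le_rfl fun m x hx => (hacyc ⟨m, x, hx⟩).elim
  · let t₀ : Fin m := ⟨0, hm.pos⟩
    have hthrough (m') (x' : Fin m' → Fin n) (hx' : IsCycleIn e x') :
        ∃ t, ({x' t, x' (cyclicNext t)} : Finset (Fin n)) = {x t₀, x (cyclicNext t₀)} := by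
      simpa using (huniq m' x' hx').ge (Finset.mem_image_of_mem _ (Finset.mem_univ t₀))
    exact linearIndepOn_edgeSet_of_not_isBipartite two_ne_zero ((isCycleIn_iff.1 hx).2.2 t₀)
      (isAcyclic_deleteEdges_of_forall_isCycleIn hthrough) (hx.not_isBipartite hm)

theorem stmt18 {K : Type*} [Field K] {n q : ℕ} (e : Fin q → Finset (Fin n))
    (hcard : ∀ i, (e i).card = 2) (hinj : Function.Injective e)
    (hG : -- either `G` is a tree (connected and acyclic) ...
      ((∀ u v : Fin n, Relation.ReflTransGen
          (fun u v => u ≠ v ∧ ∃ i, u ∈ e i ∧ v ∈ e i) u v) ∧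
        ¬ ∃ (m : ℕ) (x : Fin m → Fin n), IsCycleIn e x) ∨
      -- ... or `G` contains a unique cycle, and that cycle has odd length
      (∃ (m : ℕ) (x : Fin m → Fin n), IsCycleIn e x ∧ Odd m ∧
        ∀ (m' : ℕ) (x' : Fin m' → Fin n), IsCycleIn e x' →
          (Finset.univ.image fun t : Fin m' =>
              ({x' t, x' (cyclicNext t)} : Finset (Fin n))) =
            (Finset.univ.image fun t : Fin m =>
              ({x t, x (cyclicNext t)} : Finset (Fin n))))) :
    IsLinearType K e :=
  stmt18_general e hcard hinj (hG.imp_left And.right)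
end
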